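/- arXiv:2504.00377 — 5 statements merged into one kernel-verified Lean document; each statement's English description precedes it below -/
import Mathlib

section
/- There exist sequences (U_i)_{i∈ℕ} and (V_i)_{i∈ℕ} of compact open subsets of Ω and sequences (p_i)_{i∈ℕ}, (q_i)_{i∈ℕ} in ℕ² such that for every i the map T^{p_i} is injective on U_i, the map T^{q_i} is injective on V_i, T^{p_i}(U_i) = T^{q_i}(V_i), and G_T is the disjoint union G_T = ⨆_{i∈ℕ} Z(U_i, p_i, q_i, V_i). -/
/-!
A set `Z(U, p, q, V)` with `U`, `V` compact open, `T^p` injective on `U` and `T^q` injective on `V`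
is called a basic bisection here. The proof has three ingredients.

* Countably many basic bisections cover `G_T` (`exists_seq_cover`): a second-countable, totally
  disconnected, locally compact Hausdorff space has a countable basis of compact open sets, and
  the maps `T^m` are locally injective.
* The difference of two basic bisections `S = Z(U, p, q, V)` and `S'` is again one
  (`IsBasicBisection.sdiff`). As `T^q` is injective on `V`, an element of `S` is determined by its
  first coordinate, so `S \ S' = Z(U \ P, p, q, V)` where `P` is the projection of `S ∩ S'` to the
  first coordinate. It remains to see that `P` is compact (`isCompact_proj`) and open
  (`isOpen_proj`). Hence the usual disjointification of a cover stays among basic bisections.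
* Shrinking `U` to `U ∩ T^{-p}(T^q V)` and `V` to `V ∩ T^{-q}(T^p U)` does not change
  `Z(U, p, q, V)` and makes the two images equal (`IsBasicBisection.exists_image_eq`).
-/

open Set Function

/-- `T^m = T₁^{m₁} ∘ T₂^{m₂}` for `m = (m₁, m₂) ∈ ℕ²`. -/
def Tpow {Ω : Type*} (T₁ T₂ : Ω → Ω) (m : ℕ × ℕ) : Ω → Ω := T₁^[m.1] ∘ T₂^[m.2]

/-- The rank-2 Deaconu–Renault groupoid
`G_T = ⋃_{m,n ∈ ℕ²} {(x, m − n, y) ∈ Ω × ℤ² × Ω : T^m x = T^n y}`. -/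
def DR {Ω : Type*} (T₁ T₂ : Ω → Ω) : Set (Ω × (ℤ × ℤ) × Ω) :=
  {γ | ∃ m n : ℕ × ℕ,
    γ.2.1 = ((m.1 : ℤ) - (n.1 : ℤ), (m.2 : ℤ) - (n.2 : ℤ)) ∧
    Tpow T₁ T₂ m γ.1 = Tpow T₁ T₂ n γ.2.2}

/-- `Z(U, m, n, V) = {(x, m − n, y) : x ∈ U, y ∈ V, T^m x = T^n y}`. -/
def Zset {Ω : Type*} (T₁ T₂ : Ω → Ω) (U : Set Ω) (m n : ℕ × ℕ) (V : Set Ω) :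
    Set (Ω × (ℤ × ℤ) × Ω) :=
  {γ | γ.1 ∈ U ∧ γ.2.2 ∈ V ∧
    γ.2.1 = ((m.1 : ℤ) - (n.1 : ℤ), (m.2 : ℤ) - (n.2 : ℤ)) ∧
    Tpow T₁ T₂ m γ.1 = Tpow T₁ T₂ n γ.2.2}

section Tpow

variable {Ω : Type*} {T₁ T₂ : Ω → Ω}

lemma Tpow_add (hcomm : ∀ x, T₁ (T₂ x) = T₂ (T₁ x)) (m n : ℕ × ℕ) (x : Ω) :
    Tpow T₁ T₂ (m + n) x = Tpow T₁ T₂ m (Tpow T₁ T₂ n x) := by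
  have h : Function.Commute T₁ T₂ := hcomm
  have h' := (h.iterate_iterate n.1 m.2) (T₂^[n.2] x)
  simp only [Tpow, Function.comp_apply, Prod.fst_add, Prod.snd_add, Function.iterate_add_apply]
  rw [h']

lemma isLocalHomeomorph_iterate [TopologicalSpace Ω] {f : Ω → Ω} (hf : IsLocalHomeomorph f)
    (n : ℕ) : IsLocalHomeomorph f^[n] := by
  induction n with
  | zero => exact (Homeomorph.refl Ω).isLocalHomeomorph
  | succ n ih => exact ih.comp hf

lemma isLocalHomeomorph_Tpow [TopologicalSpace Ω] (hl₁ : IsLocalHomeomorph T₁)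
    (hl₂ : IsLocalHomeomorph T₂) (m : ℕ × ℕ) : IsLocalHomeomorph (Tpow T₁ T₂ m) :=
  (isLocalHomeomorph_iterate hl₁ m.1).comp (isLocalHomeomorph_iterate hl₂ m.2)

end Tpow

section Bisection

variable {Ω : Type*} [TopologicalSpace Ω] {T₁ T₂ : Ω → Ω}

/-- `S` is of the form `Z(U, p, q, V)` with `U`, `V` compact open, `T^p` injective on `U` and `T^q`
injective on `V`. The condition `T^p U = T^q V` is not required. -/
def IsBasicBisection (T₁ T₂ : Ω → Ω) (S : Set (Ω × (ℤ × ℤ) × Ω)) : Prop :=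
  ∃ (U : Set Ω) (p q : ℕ × ℕ) (V : Set Ω),
    IsCompact U ∧ IsOpen U ∧ IsCompact V ∧ IsOpen V ∧
    Set.InjOn (Tpow T₁ T₂ p) U ∧ Set.InjOn (Tpow T₁ T₂ q) V ∧ S = Zset T₁ T₂ U p q V

/-- In a Hausdorff space, intersecting a compact open set with the preimage of a compact open set
gives a compact open set. -/
lemma isCompact_isOpen_inter_preimage [T2Space Ω] {f : Ω → Ω} (hf : Continuous f) {U W : Set Ω}
    (hUc : IsCompact U) (hUo : IsOpen U) (hWc : IsCompact W) (hWo : IsOpen W) :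
    IsCompact (U ∩ f ⁻¹' W) ∧ IsOpen (U ∩ f ⁻¹' W) :=
  ⟨hUc.inter_right (hWc.isClosed.preimage hf), hUo.inter (hWo.preimage hf)⟩

/-- A basic bisection has a presentation `Z(U, p, q, V)` with `T^p U = T^q V`. -/
lemma IsBasicBisection.exists_image_eq [T2Space Ω] (hl₁ : IsLocalHomeomorph T₁)
    (hl₂ : IsLocalHomeomorph T₂) {S : Set (Ω × (ℤ × ℤ) × Ω)} (hS : IsBasicBisection T₁ T₂ S) :
    ∃ (U V : Set Ω) (p q : ℕ × ℕ),
      IsCompact U ∧ IsOpen U ∧ IsCompact V ∧ IsOpen V ∧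
      Set.InjOn (Tpow T₁ T₂ p) U ∧ Set.InjOn (Tpow T₁ T₂ q) V ∧
      Tpow T₁ T₂ p '' U = Tpow T₁ T₂ q '' V ∧ S = Zset T₁ T₂ U p q V := by
  obtain ⟨U, p, q, V, hUc, hUo, hVc, hVo, hU, hV, rfl⟩ := hS
  have hp := isLocalHomeomorph_Tpow hl₁ hl₂ p
  have hq := isLocalHomeomorph_Tpow hl₁ hl₂ q
  obtain ⟨hUc', hUo'⟩ := isCompact_isOpen_inter_preimage hp.continuous hUc hUo
    (hVc.image hq.continuous) (hq.isOpenMap V hVo)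
  obtain ⟨hVc', hVo'⟩ := isCompact_isOpen_inter_preimage hq.continuous hVc hVo
    (hUc.image hp.continuous) (hp.isOpenMap U hUo)
  refine ⟨_, _, p, q, hUc', hUo', hVc', hVo', hU.mono inter_subset_left,
    hV.mono inter_subset_left, ?_, ?_⟩
  · rw [image_inter_preimage, image_inter_preimage, inter_comm]
  · ext ⟨x, k, y⟩
    constructor
    · rintro ⟨hx, hy, hk, he⟩
      exact ⟨⟨hx, y, hy, he.symm⟩, ⟨hy, x, hx, he⟩, hk, he⟩
    · rintro ⟨hx, hy, hk, he⟩
      exact ⟨hx.1, hy.1, hk, he⟩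

/-- The projection to the first coordinate of an intersection `Z(U, p, q, V) ∩ Z(U', p', q', V')`
is the projection of a closed subset of the compact set `(U ∩ U') × (V ∩ V')`. -/
lemma isCompact_proj [T2Space Ω] (hl₁ : IsLocalHomeomorph T₁) (hl₂ : IsLocalHomeomorph T₂)
    {U V U' V' : Set Ω} {p q p' q' : ℕ × ℕ}
    (hU : IsCompact U) (hV : IsCompact V) (hU' : IsCompact U') (hV' : IsCompact V') :
    IsCompact (Prod.fst '' (Zset T₁ T₂ U p q V ∩ Zset T₁ T₂ U' p' q' V')) := by
  have hc := fun m => (isLocalHomeomorph_Tpow hl₁ hl₂ m).continuous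
  by_cases hk : ((p.1 : ℤ) - q.1, (p.2 : ℤ) - q.2) = ((p'.1 : ℤ) - q'.1, (p'.2 : ℤ) - q'.2)
  · have hK : IsCompact (((U ∩ U') ×ˢ (V ∩ V')) ∩
        ({z : Ω × Ω | Tpow T₁ T₂ p z.1 = Tpow T₁ T₂ q z.2} ∩
          {z : Ω × Ω | Tpow T₁ T₂ p' z.1 = Tpow T₁ T₂ q' z.2})) :=
      ((hU.inter hU').prod (hV.inter hV')).inter_right
        ((isClosed_eq ((hc p).comp continuous_fst) ((hc q).comp continuous_snd)).inter
          (isClosed_eq ((hc p').comp continuous_fst) ((hc q').comp continuous_snd)))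
    convert hK.image continuous_fst using 1
    ext x
    constructor
    · rintro ⟨⟨x, k, y⟩, ⟨⟨hx, hy, -, he⟩, ⟨hx', hy', -, he'⟩⟩, rfl⟩
      exact ⟨(x, y), ⟨⟨⟨hx, hx'⟩, hy, hy'⟩, he, he'⟩, rfl⟩
    · rintro ⟨⟨x, y⟩, ⟨⟨⟨hx, hx'⟩, hy, hy'⟩, he, he'⟩, rfl⟩
      exact ⟨(x, _, y), ⟨⟨hx, hy, rfl, he⟩, ⟨hx', hy', hk, he'⟩⟩, rfl⟩
  · convert isCompact_empty
    refine Set.image_eq_empty.2 (Set.eq_empty_of_forall_notMem ?_)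
    rintro γ ⟨⟨-, -, h₁, -⟩, ⟨-, -, h₂, -⟩⟩
    exact hk (h₁.symm.trans h₂)

/-- The projection to the first coordinate of an intersection `Z(U, p, q, V) ∩ Z(U', p', q', V')`
is open. Suppose `(x₀, k, y₀)` lies in it. As `p - q = k = p' - q'`, some `a`, `b` satisfy
`p + a = p' + b` and `q + a = q' + b`. If `T^p x = T^q y` with `x` near `x₀` and `y` near `y₀`, then
`T^b T^{p'} x = T^b T^{q'} y`, and local injectivity of `T^b` gives `T^{p'} x = T^{q'} y`. -/
lemma isOpen_proj (hl₁ : IsLocalHomeomorph T₁) (hl₂ : IsLocalHomeomorph T₂)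
    (hcomm : ∀ x, T₁ (T₂ x) = T₂ (T₁ x))
    {U V U' V' : Set Ω} {p q p' q' : ℕ × ℕ}
    (hU : IsOpen U) (hV : IsOpen V) (hU' : IsOpen U') (hV' : IsOpen V') :
    IsOpen (Prod.fst '' (Zset T₁ T₂ U p q V ∩ Zset T₁ T₂ U' p' q' V')) := by
  have hc := fun m => (isLocalHomeomorph_Tpow hl₁ hl₂ m).continuous
  rw [isOpen_iff_mem_nhds]
  rintro _ ⟨⟨x₀, k, y₀⟩, ⟨⟨hx, hy, hk, he⟩, ⟨hx', hy', hk', he'⟩⟩, rfl⟩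
  dsimp only at hx hy hk he hx' hy' hk' he' ⊢
  have hkk := hk.symm.trans hk'
  rw [Prod.mk.injEq] at hkk
  obtain ⟨a, b, hpab, hqab⟩ : ∃ a b : ℕ × ℕ, a + p = b + p' ∧ a + q = b + q' := by
    refine ⟨p', p, add_comm _ _, ?_⟩
    ext <;> simp only [Prod.fst_add, Prod.snd_add] <;> omega
  obtain ⟨N, hNo, hzN, hN⟩ :=
    (isLocalHomeomorph_Tpow hl₁ hl₂ b).isLocallyInjective (Tpow T₁ T₂ p' x₀)
  have hV₂ : IsOpen (V ∩ V' ∩ Tpow T₁ T₂ q' ⁻¹' N) := (hV.inter hV').inter (hNo.preimage (hc q'))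
  have hU₂ : IsOpen (U ∩ U' ∩ Tpow T₁ T₂ p' ⁻¹' N ∩
      Tpow T₁ T₂ p ⁻¹' (Tpow T₁ T₂ q '' (V ∩ V' ∩ Tpow T₁ T₂ q' ⁻¹' N))) :=
    ((hU.inter hU').inter (hNo.preimage (hc p'))).inter
      (((isLocalHomeomorph_Tpow hl₁ hl₂ q).isOpenMap _ hV₂).preimage (hc p))
  refine Filter.mem_of_superset (hU₂.mem_nhds
    ⟨⟨⟨hx, hx'⟩, hzN⟩, y₀, ⟨⟨hy, hy'⟩, ?_⟩, he.symm⟩) ?_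
  · rw [mem_preimage, ← he']
    exact hzN
  · rintro x ⟨⟨⟨hxU, hxU'⟩, hxN⟩, y, ⟨⟨hyV, hyV'⟩, hyN⟩, hxy⟩
    refine ⟨(x, k, y), ⟨⟨hxU, hyV, hk, hxy.symm⟩, ⟨hxU', hyV', hk', hN hxN hyN ?_⟩⟩, rfl⟩
    rw [← Tpow_add hcomm, ← Tpow_add hcomm, ← hpab, ← hqab, Tpow_add hcomm, Tpow_add hcomm, hxy]

lemma IsBasicBisection.sdiff [T2Space Ω] (hl₁ : IsLocalHomeomorph T₁)
    (hl₂ : IsLocalHomeomorph T₂) (hcomm : ∀ x, T₁ (T₂ x) = T₂ (T₁ x))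
    {S S' : Set (Ω × (ℤ × ℤ) × Ω)}
    (hS : IsBasicBisection T₁ T₂ S) (hS' : IsBasicBisection T₁ T₂ S') :
    IsBasicBisection T₁ T₂ (S \ S') := by
  obtain ⟨U, p, q, V, hUc, hUo, hVc, hVo, hU, hV, rfl⟩ := hS
  obtain ⟨U', p', q', V', hUc', hUo', hVc', hVo', -, -, rfl⟩ := hS'
  refine ⟨U \ (Prod.fst '' (Zset T₁ T₂ U p q V ∩ Zset T₁ T₂ U' p' q' V')), p, q, V,
    hUc.diff (isOpen_proj hl₁ hl₂ hcomm hUo hVo hUo' hVo'),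
    hUo.sdiff (isCompact_proj hl₁ hl₂ hUc hVc hUc' hVc').isClosed,
    hVc, hVo, hU.mono sdiff_subset, hV, ?_⟩
  ext ⟨x, k, y⟩
  constructor
  · rintro ⟨⟨hx, hy, hk, he⟩, hn⟩
    refine ⟨⟨hx, ?_⟩, hy, hk, he⟩
    rintro ⟨⟨x', k', y'⟩, ⟨⟨-, hy', hk', he'⟩, hm⟩, hxx⟩
    dsimp only at hx hy hk he hy' hk' he' hxx
    subst hxx
    -- Two elements of `Z(U, p, q, V)` with the same first coordinate coincide.
    obtain rfl : y = y' := hV hy hy' (he.symm.trans he')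
    obtain rfl : k = k' := hk.trans hk'.symm
    exact hn hm
  · rintro ⟨⟨hx, hn⟩, hy, hk, he⟩
    have hmem : (x, k, y) ∈ Zset T₁ T₂ U p q V := ⟨hx, hy, hk, he⟩
    exact ⟨hmem, fun hm => hn ⟨_, ⟨hmem, hm⟩, rfl⟩⟩

lemma isTopologicalBasis_isCompact_isOpen (Ω : Type*) [TopologicalSpace Ω]
    [TotallyDisconnectedSpace Ω] [LocallyCompactSpace Ω] [T2Space Ω] :
    TopologicalSpace.IsTopologicalBasis {s : Set Ω | IsCompact s ∧ IsOpen s} := by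
  refine TopologicalSpace.isTopologicalBasis_of_isOpen_of_nhds (fun u hu => hu.2) ?_
  intro x W hx hW
  obtain ⟨K, hK, hxK, hKW⟩ := exists_compact_subset hW hx
  obtain ⟨C, hC, hxC, hCK⟩ :=
    loc_compact_Haus_tot_disc_of_zero_dim.exists_subset_of_mem_open hxK isOpen_interior
  exact ⟨C, ⟨hK.of_isClosed_subset hC.1 (hCK.trans interior_subset), hC.2⟩, hxC,
    (hCK.trans interior_subset).trans hKW⟩

lemma exists_seq_cover [SecondCountableTopology Ω] [TotallyDisconnectedSpace Ω]
    [LocallyCompactSpace Ω] [T2Space Ω] (hl₁ : IsLocalHomeomorph T₁) (hl₂ : IsLocalHomeomorph T₂) :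
    ∃ f : ℕ → Set (Ω × (ℤ × ℤ) × Ω),
      (∀ i, IsBasicBisection T₁ T₂ (f i)) ∧ DR T₁ T₂ = ⋃ i, f i := by
  obtain ⟨B, hBsub, hBc, hB⟩ := (isTopologicalBasis_isCompact_isOpen Ω).exists_countable
  -- The members of `C` are the basic bisections `Z(U, p, q, V)` with `U`, `V` in `B`. The empty
  -- set is included so that `C` is nonempty and can be enumerated.
  let C : Set (Set (Ω × (ℤ × ℤ) × Ω)) :=
    insert ∅ (((fun t : (Set Ω × Set Ω) × (ℕ × ℕ) × (ℕ × ℕ) =>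
      Zset T₁ T₂ t.1.1 t.2.1 t.2.2 t.1.2) '' ((B ×ˢ B) ×ˢ univ)) ∩
        {S | IsBasicBisection T₁ T₂ S})
  have hCc : C.Countable :=
    ((((hBc.prod hBc).prod countable_univ).image _).mono inter_subset_left).insert _
  obtain ⟨f, hf⟩ := hCc.exists_eq_range ⟨∅, mem_insert _ _⟩
  have hfC : ∀ i, f i ∈ C := fun i => hf ▸ mem_range_self i
  have hgood : ∀ i, IsBasicBisection T₁ T₂ (f i) := by
    intro i
    rcases hfC i with h | h
    · refine ⟨∅, 0, 0, ∅, isCompact_empty, isOpen_empty, isCompact_empty, isOpen_empty,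
        injOn_empty _, injOn_empty _, h.trans ?_⟩
      exact (Set.eq_empty_of_forall_notMem fun γ hγ => hγ.1).symm
    · exact h.2
  refine ⟨f, hgood, Set.Subset.antisymm ?_ (iUnion_subset fun i => ?_)⟩
  · rintro ⟨x, k, y⟩ ⟨p, q, hk, he⟩
    have key : ∀ (m : ℕ × ℕ) (z : Ω), ∃ W ∈ B, z ∈ W ∧ InjOn (Tpow T₁ T₂ m) W := by
      intro m z
      obtain ⟨N, hNo, hzN, hN⟩ := (isLocalHomeomorph_Tpow hl₁ hl₂ m).isLocallyInjective z
      obtain ⟨W, hW, hzW, hWN⟩ := hB.exists_subset_of_mem_open hzN hNo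
      exact ⟨W, hW, hzW, hN.mono hWN⟩
    obtain ⟨U, hUB, hxU, hU⟩ := key p x
    obtain ⟨V, hVB, hyV, hV⟩ := key q y
    have hmem : Zset T₁ T₂ U p q V ∈ C :=
      Or.inr ⟨⟨((U, V), p, q), ⟨⟨hUB, hVB⟩, mem_univ _⟩, rfl⟩,
        U, p, q, V, (hBsub hUB).1, (hBsub hUB).2, (hBsub hVB).1, (hBsub hVB).2, hU, hV, rfl⟩
    rw [hf] at hmem
    obtain ⟨i, hi⟩ := hmem
    exact mem_iUnion.2 ⟨i, hi ▸ ⟨hxU, hyV, hk, he⟩⟩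
  · obtain ⟨U, p, q, V, -, -, -, -, -, -, h⟩ := hgood i
    rw [h]
    rintro γ ⟨-, -, hk, he⟩
    exact ⟨p, q, hk, he⟩

end Bisection

/-- There exist sequences `(Uᵢ)`, `(Vᵢ)` of compact open subsets of `Ω`
and sequences `(pᵢ)`, `(qᵢ)` in `ℕ²` such that each `T^{pᵢ}` is injective on `Uᵢ`, each
`T^{qᵢ}` is injective on `Vᵢ`, `T^{pᵢ}(Uᵢ) = T^{qᵢ}(Vᵢ)`, and `G_T` is the disjoint
union `G_T = ⨆ᵢ Z(Uᵢ, pᵢ, qᵢ, Vᵢ)`. -/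
theorem stmt3 {Ω : Type*} [TopologicalSpace Ω] [SecondCountableTopology Ω]
    [TotallyDisconnectedSpace Ω] [LocallyCompactSpace Ω] [T2Space Ω]
    (T₁ T₂ : Ω → Ω)
    (hs₁ : Function.Surjective T₁) (hs₂ : Function.Surjective T₂)
    (hl₁ : IsLocalHomeomorph T₁) (hl₂ : IsLocalHomeomorph T₂)
    (hcomm : ∀ x, T₁ (T₂ x) = T₂ (T₁ x)) :
    ∃ (U V : ℕ → Set Ω) (p q : ℕ → ℕ × ℕ),
      (∀ i, IsCompact (U i)) ∧ (∀ i, IsOpen (U i)) ∧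
      (∀ i, IsCompact (V i)) ∧ (∀ i, IsOpen (V i)) ∧
      (∀ i, Set.InjOn (Tpow T₁ T₂ (p i)) (U i)) ∧
      (∀ i, Set.InjOn (Tpow T₁ T₂ (q i)) (V i)) ∧
      (∀ i, Tpow T₁ T₂ (p i) '' U i = Tpow T₁ T₂ (q i) '' V i) ∧
      (DR T₁ T₂ = ⋃ i, Zset T₁ T₂ (U i) (p i) (q i) (V i)) ∧
      (Pairwise fun i j =>
        Disjoint (Zset T₁ T₂ (U i) (p i) (q i) (V i))
          (Zset T₁ T₂ (U j) (p j) (q j) (V j))) := by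
  obtain ⟨f, hgood, hcover⟩ := exists_seq_cover hl₁ hl₂
  have hdis : ∀ i, IsBasicBisection T₁ T₂ (disjointed f i) := fun i =>
    disjointedRec (fun _ j ht => ht.sdiff hl₁ hl₂ hcomm (hgood j)) (hgood i)
  choose U V p q hUc hUo hVc hVo hU hV himg hZ using
    fun i => (hdis i).exists_image_eq hl₁ hl₂
  refine ⟨U, V, p, q, hUc, hUo, hVc, hVo, hU, hV, himg, ?_, ?_⟩
  · simp only [← hZ]
    rw [hcover, iUnion_disjointed]
  · intro i j hij
    rw [← hZ, ← hZ]
    exact disjoint_disjointed f hij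
end

section
/- Let X and Y be second-countable, totally disconnected, locally compact Hausdorff spaces and let T : X → Y be a surjective local homeomorphism. For every continuous compactly supported function h : X → ℤ and every y ∈ Y, the set {x ∈ X : T(x) = y, h(x) ≠ 0} is finite; and the function T_*h : Y → ℤ defined by (T_*h)(y) = Σ_{x : T(x) = y} h(x) is continuous and compactly supported. Moreover h ↦ T_*h is a group homomorphism from C_c(X, ℤ) to C_c(Y, ℤ). -/
/-!
The support `K` of `h` is compact, and the fibres of a local homeomorphism are discrete, so each
fibre meets `K` in a finite set `F` (`finite_fibre_inter`).

Continuity holds because `T_* h` is locally constant (`exists_Tstar_locally_eq`). Around the points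
`x` of `F`, the fibre of `y` in `K`, take disjoint open sets `V x` on which `T` is injective and `h`
is constant. The compact set `T (K \ ⋃ V x)` does not contain `y`, so for `y'` near `y` the part of
the fibre of `y'` in `K` lies in `⋃ V x`, and it has exactly one point in each `V x`, where `h`
takes the value `h x`. Hence `(T_* h)(y') = Σ_{x ∈ F} h x` throughout a neighbourhood of `y`.

The support of `T_* h` is contained in the compact set `T K`, and additivity is that of finite sums.
-/

open Set Function

/-- `(T_* h)(y) = Σ_{x : T x = y} h(x)` (a `finsum`, which is `0` if the sum is not
finitely supported). -/
noncomputable def Tstar {X Y : Type*} (T : X → Y) (h : X → ℤ) : Y → ℤ :=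
  fun y => ∑ᶠ x ∈ T ⁻¹' {y}, h x

lemma finite_fibre_inter {X Y : Type*} [TopologicalSpace X] [TopologicalSpace Y] [T1Space Y]
    {T : X → Y} (hT : IsLocalHomeomorph T) {K : Set X} (hK : IsCompact K) (y : Y) :
    (T ⁻¹' {y} ∩ K).Finite := by
  have hc : IsCompact (T ⁻¹' {y} ∩ K) :=
    hK.inter_left (isClosed_singleton.preimage hT.continuous)
  refine hc.finite ((hT.isLocalHomeomorphOn.mono (subset_univ _)).isDiscrete_of_image ?_)
  exact (Set.subsingleton_singleton.anti (by rintro _ ⟨x, hx, rfl⟩; exact hx.1)).isDiscrete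

lemma finite_fibre_inter_support {X Y : Type*} [TopologicalSpace X] [TopologicalSpace Y]
    [T1Space Y] {T : X → Y} (hT : IsLocalHomeomorph T) {h : X → ℤ} (hs : HasCompactSupport h)
    (y : Y) : (T ⁻¹' {y} ∩ support h).Finite :=
  (finite_fibre_inter hT hs y).subset (inter_subset_inter_right _ (subset_tsupport h))

/-- `T_* h` is locally constant: near `y` it equals the sum of `h` over the finitely many points of
`tsupport h` above `y`. -/
lemma exists_Tstar_locally_eq {X Y : Type*} [TopologicalSpace X] [TopologicalSpace Y]
    [T2Space X] [T2Space Y] {T : X → Y} (hT : IsLocalHomeomorph T) {h : X → ℤ}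
    (hc : Continuous h) (hs : HasCompactSupport h) (y : Y) :
    ∃ W : Set Y, IsOpen W ∧ y ∈ W ∧
      ∀ y' ∈ W, Tstar T h y' = ∑ᶠ x ∈ T ⁻¹' {y} ∩ tsupport h, h x := by
  set F := T ⁻¹' {y} ∩ tsupport h with hFdef
  have hF : F.Finite := finite_fibre_inter hT hs y
  obtain ⟨U, hU, hUd⟩ := hF.t2_separation
  choose e hxe he using hT
  let V : X → Set X := fun x => U x ∩ (e x).source ∩ h ⁻¹' {h x}
  have hVo : ∀ x, IsOpen (V x) := fun x =>
    ((hU x).2.inter (e x).open_source).inter ((isOpen_discrete _).preimage hc)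
  have hxV : ∀ x, x ∈ V x := fun x => ⟨⟨(hU x).1, hxe x⟩, rfl⟩
  have hVinj : ∀ x, InjOn T (V x) := fun x => by
    rw [he x]; exact (e x).injOn.mono fun z hz => hz.1.2
  have hT' : IsLocalHomeomorph T := fun x => ⟨e x, hxe x, he x⟩
  have hKc : IsClosed (T '' (tsupport h \ ⋃ x ∈ F, V x)) :=
    ((IsCompact.diff hs (isOpen_biUnion fun x _ => hVo x)).image hT'.continuous).isClosed
  refine ⟨(⋂ x ∈ F, T '' V x) ∩ (T '' (tsupport h \ ⋃ x ∈ F, V x))ᶜ,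
    (hF.isOpen_biInter fun x _ => hT'.isOpenMap _ (hVo x)).inter hKc.isOpen_compl, ⟨?_, ?_⟩, ?_⟩
  · exact mem_iInter₂.2 fun x hx => ⟨x, hxV x, hx.1⟩
  · rintro ⟨x, ⟨hxK, hxn⟩, hxy⟩
    exact hxn (mem_biUnion (show x ∈ F from ⟨hxy, hxK⟩) (hxV x))
  · rintro w ⟨h1, h2⟩
    -- `σ x` is the unique point of `V x` above `w`
    have hσ : ∀ x, ∃ z, x ∈ F → z ∈ V x ∧ T z = w := fun x => by
      by_cases hx : x ∈ F
      · obtain ⟨z, hz⟩ := mem_iInter₂.1 h1 x hx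
        exact ⟨z, fun _ => hz⟩
      · exact ⟨x, fun hx' => absurd hx' hx⟩
    choose σ hσ using hσ
    have hσinj : InjOn σ F := fun a ha b hb hab => by
      by_contra hne
      exact disjoint_left.1 (hUd ha hb hne) (hσ a ha).1.1.1 (hab ▸ (hσ b hb).1.1.1)
    have hfib : T ⁻¹' {w} ∩ support h = σ '' F ∩ support h := by
      ext z
      constructor
      · rintro ⟨hzy, hz⟩
        refine ⟨?_, hz⟩
        have : z ∈ ⋃ x ∈ F, V x := by
          by_contra hn
          exact h2 ⟨z, ⟨subset_tsupport h hz, hn⟩, hzy⟩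
        obtain ⟨x, hx, hzx⟩ := mem_iUnion₂.1 this
        exact ⟨x, hx, hVinj x (hσ x hx).1 hzx ((hσ x hx).2.trans hzy.symm)⟩
      · rintro ⟨⟨x, hx, rfl⟩, hz⟩
        exact ⟨(hσ x hx).2, hz⟩
    calc Tstar T h w = ∑ᶠ z ∈ σ '' F, h z := finsum_mem_inter_support_eq _ _ _ hfib
      _ = ∑ᶠ x ∈ F, h (σ x) := finsum_mem_image hσinj
      _ = ∑ᶠ x ∈ F, h x := finsum_mem_congr rfl fun x hx => (hσ x hx).1.2

/-- Let `X`, `Y` be second-countable, totally disconnected, locally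
compact Hausdorff spaces and `T : X → Y` a surjective local homeomorphism.  For every
continuous compactly supported `h : X → ℤ` and every `y ∈ Y` the set
`{x : T x = y, h x ≠ 0}` is finite, and `T_* h` is continuous and compactly supported.
Moreover `h ↦ T_* h` is a group homomorphism `C_c(X, ℤ) → C_c(Y, ℤ)`. -/
theorem stmt5 {X Y : Type*} [TopologicalSpace X] [TopologicalSpace Y]
    [SecondCountableTopology X] [SecondCountableTopology Y]
    [TotallyDisconnectedSpace X] [TotallyDisconnectedSpace Y]
    [LocallyCompactSpace X] [LocallyCompactSpace Y] [T2Space X] [T2Space Y]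
    (T : X → Y) (hTs : Function.Surjective T) (hTl : IsLocalHomeomorph T) :
    (∀ h : X → ℤ, Continuous h → HasCompactSupport h →
      (∀ y : Y, {x : X | T x = y ∧ h x ≠ 0}.Finite) ∧
      Continuous (Tstar T h) ∧ HasCompactSupport (Tstar T h)) ∧
    (∀ h₁ h₂ : X → ℤ, Continuous h₁ → HasCompactSupport h₁ →
      Continuous h₂ → HasCompactSupport h₂ →
      Tstar T (h₁ + h₂) = Tstar T h₁ + Tstar T h₂) := by
  refine ⟨fun h hc hs => ⟨fun y => finite_fibre_inter_support hTl hs y, ?_, ?_⟩,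
    fun h₁ h₂ _ hs₁ _ hs₂ => ?_⟩
  · refine IsLocallyConstant.continuous ((IsLocallyConstant.iff_exists_open _).2 fun y => ?_)
    obtain ⟨W, hWo, hyW, hW⟩ := exists_Tstar_locally_eq hTl hc hs y
    exact ⟨W, hWo, hyW, fun y' hy' => (hW y' hy').trans (hW y hyW).symm⟩
  · refine HasCompactSupport.intro (IsCompact.image hs hTl.continuous) fun y hy => ?_
    refine finsum_mem_of_eqOn_zero fun x hx => ?_
    by_contra hne
    exact hy ⟨x, subset_tsupport h hne, hx⟩
  · ext y
    exact finsum_mem_add_distrib' (finite_fibre_inter_support hTl hs₁ y)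
      (finite_fibre_inter_support hTl hs₂ y)
end

section
/- Every continuous compactly supported function h : Ω → ℤ is a finite ℤ-linear combination of indicator functions 1_U of compact open sets U ⊆ Ω on which both T₁ and T₂ are injective; that is, the subgroup of C_c(Ω, ℤ) generated by {1_U : U ⊆ Ω compact open, T₁|_U and T₂|_U injective} is all of C_c(Ω, ℤ). -/
/-!
Indicators of compact open sets are continuous with compact support, and these functions form a
group, so one inclusion is immediate. For the other, every point `x` has a compact open
neighbourhood on which `T₁` and `T₂` are injective and `h` is constantly `h x`; any clopen piece
`W` of it satisfies `1_W h = h x • 1_W`. The property that `1_W h` lies in the generated subgroup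
for *every* clopen `W` inside a given clopen set passes to finite unions, since
`W = (W ∩ V₁) ⊔ (W \ V₁)`. By compactness it holds on a clopen set containing the support of `h`
(`exists_isClopen_indicator_mem`).
-/

open Set Function

/-- Local-to-global principle: if every point has a clopen neighbourhood all of whose clopen
subsets `W` satisfy `1_W h ∈ G`, then every compact set has such a clopen neighbourhood. -/
lemma exists_isClopen_indicator_mem {X : Type*} [TopologicalSpace X] (G : AddSubgroup (X → ℤ))
    (h : X → ℤ)
    (hloc : ∀ x, ∃ V : Set X, IsClopen V ∧ x ∈ V ∧
      ∀ W, IsClopen W → W ⊆ V → Set.indicator W h ∈ G)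
    {K : Set X} (hK : IsCompact K) :
    ∃ V : Set X, IsClopen V ∧ K ⊆ V ∧ ∀ W, IsClopen W → W ⊆ V → Set.indicator W h ∈ G := by
  refine hK.induction_on (p := fun s => ∃ V : Set X, IsClopen V ∧ s ⊆ V ∧
    ∀ W, IsClopen W → W ⊆ V → Set.indicator W h ∈ G) ?_ ?_ ?_ ?_
  · refine ⟨∅, isClopen_empty, Subset.rfl, fun W _ hW => ?_⟩
    rw [Set.subset_empty_iff.mp hW, Set.indicator_empty]
    exact G.zero_mem
  · rintro s t hst ⟨V, hV, htV, H⟩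
    exact ⟨V, hV, hst.trans htV, H⟩
  · rintro s t ⟨V₁, hV₁, hs, H₁⟩ ⟨V₂, hV₂, ht, H₂⟩
    refine ⟨V₁ ∪ V₂, hV₁.union hV₂, Set.union_subset_union hs ht, fun W hW hWV => ?_⟩
    have e : Set.indicator W h = Set.indicator (W ∩ V₁) h + Set.indicator (W \ V₁) h := by
      funext x
      by_cases h1 : x ∈ W <;> by_cases h2 : x ∈ V₁ <;> simp [h1, h2]
    rw [e]
    refine G.add_mem (H₁ _ (hW.inter hV₁) Set.inter_subset_right) (H₂ _ (hW.diff hV₁) ?_)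
    rintro x ⟨hx, hx1⟩
    exact (hWV hx).resolve_left hx1
  · intro x _
    obtain ⟨V, hV, hx, H⟩ := hloc x
    exact ⟨V, mem_nhdsWithin_of_mem_nhds (hV.isOpen.mem_nhds hx), V, hV, Subset.rfl, H⟩

/-- A local homeomorphism is injective on an open neighbourhood of each point. -/
lemma IsLocalHomeomorph.exists_isOpen_injOn {X Y : Type*} [TopologicalSpace X]
    [TopologicalSpace Y] {f : X → Y} (hf : IsLocalHomeomorph f) (x : X) :
    ∃ U : Set X, IsOpen U ∧ x ∈ U ∧ Set.InjOn f U := by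
  obtain ⟨e, hx, rfl⟩ := hf x
  exact ⟨e.source, e.open_source, hx, e.injOn⟩

/-- Every continuous compactly supported function `h : Ω → ℤ` is a
finite `ℤ`-linear combination of indicator functions `1_U` of compact open sets
`U ⊆ Ω` on which both `T₁` and `T₂` are injective; that is, the subgroup of
`C_c(Ω, ℤ)` generated by `{1_U : U ⊆ Ω compact open, T₁|_U and T₂|_U injective}` is
all of `C_c(Ω, ℤ)`. -/
theorem stmt7 {Ω : Type*} [TopologicalSpace Ω] [SecondCountableTopology Ω]
    [TotallyDisconnectedSpace Ω] [LocallyCompactSpace Ω] [T2Space Ω]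
    (T₁ T₂ : Ω → Ω)
    (hs₁ : Function.Surjective T₁) (hs₂ : Function.Surjective T₂)
    (hl₁ : IsLocalHomeomorph T₁) (hl₂ : IsLocalHomeomorph T₂)
    (hcomm : ∀ x, T₁ (T₂ x) = T₂ (T₁ x)) :
    (AddSubgroup.closure {f : Ω → ℤ | ∃ U : Set Ω, IsCompact U ∧ IsOpen U ∧
        Set.InjOn T₁ U ∧ Set.InjOn T₂ U ∧ f = Set.indicator U 1} : Set (Ω → ℤ)) =
      {h : Ω → ℤ | Continuous h ∧ HasCompactSupport h} := by
  apply Set.Subset.antisymm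
  · intro f hf
    refine AddSubgroup.closure_induction (p := fun f _ => Continuous f ∧ HasCompactSupport f)
      ?_ ?_ ?_ ?_ hf
    · rintro f ⟨U, hUc, hUo, -, -, rfl⟩
      refine ⟨continuous_one.indicator fun a ha => ?_, ?_⟩
      · rw [IsClopen.frontier_eq ⟨hUc.isClosed, hUo⟩] at ha
        exact ha.elim
      · exact HasCompactSupport.intro hUc fun x hx => Set.indicator_of_notMem hx _
    · exact ⟨continuous_zero, HasCompactSupport.zero⟩
    · rintro f g - - ⟨hf, hf'⟩ ⟨hg, hg'⟩
      exact ⟨hf.add hg, hf'.add hg'⟩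
    · rintro f - ⟨hf, hf'⟩
      exact ⟨hf.neg, hf'.neg⟩
  · rintro h ⟨hc, hK⟩
    -- `h` is locally constant, so its support is already clopen.
    have hcl : IsClopen (support h) := (isClopen_discrete ({0}ᶜ : Set ℤ)).preimage hc
    let G : AddSubgroup (Ω → ℤ) := AddSubgroup.closure
      {f : Ω → ℤ | ∃ U : Set Ω, IsCompact U ∧ IsOpen U ∧
        Set.InjOn T₁ U ∧ Set.InjOn T₂ U ∧ f = Set.indicator U 1}
    have hloc : ∀ x, ∃ V : Set Ω, IsClopen V ∧ x ∈ V ∧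
        ∀ W, IsClopen W → W ⊆ V → Set.indicator W h ∈ G := by
      intro x
      obtain ⟨U₁, ho₁, hx₁, hi₁⟩ := hl₁.exists_isOpen_injOn x
      obtain ⟨U₂, ho₂, hx₂, hi₂⟩ := hl₂.exists_isOpen_injOn x
      obtain ⟨C, hC, hxC⟩ := exists_compact_mem_nhds x
      -- Shrinking into the interior of a compact set makes the clopen neighbourhood compact.
      obtain ⟨V, hV, hxV, hVs⟩ := loc_compact_Haus_tot_disc_of_zero_dim.mem_nhds_iff.mp
        ((((ho₁.inter ho₂).inter ((isOpen_discrete {h x}).preimage hc)).inter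
          isOpen_interior).mem_nhds
            ⟨⟨⟨hx₁, hx₂⟩, Set.mem_singleton (h x)⟩, mem_interior_iff_mem_nhds.mpr hxC⟩)
      refine ⟨V, hV, hxV, fun W hW hWV => ?_⟩
      have hWs := hWV.trans hVs
      have e : Set.indicator W h = h x • Set.indicator W (1 : Ω → ℤ) := by
        funext y
        by_cases hy : y ∈ W
        · have : h y = h x := (hWs hy).1.2
          simp [hy, this]
        · simp [hy]
      rw [e]
      have hW1 : Set.indicator W (1 : Ω → ℤ) ∈ G :=
        AddSubgroup.subset_closure ⟨W,
          hC.of_isClosed_subset hW.isClosed fun y hy => interior_subset (hWs hy).2, hW.isOpen,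
          hi₁.mono fun y hy => (hWs hy).1.1.1, hi₂.mono fun y hy => (hWs hy).1.1.2, rfl⟩
      exact G.zsmul_mem hW1 (h x)
    obtain ⟨V, -, hKV, H⟩ := exists_isClopen_indicator_mem G h hloc hK
    have hmem := H (support h) hcl ((subset_tsupport h).trans hKV)
    rwa [Set.indicator_support] at hmem
end

section
/- The subgroup {(1 − (T₁)_*)f + (1 − (T₂)_*)g : f, g ∈ C_c(Ω, ℤ)} of the additive group of functions Ω → ℤ is equal to the coboundary subgroup H_{G_T}, the subgroup generated by the functions 1_{s(E)} − 1_{r(E)} as E ranges over all compact open bisections of G_T. Consequently, G_T satisfies the coboundary condition H_{G_T} ∩ C_c(Ω, ℕ) = {0} if and only if (Ω, T₁, T₂) satisfies the generalised matrix condition {(1 − (T₁)_*)f + (1 − (T₂)_*)g : f, g ∈ C_c(Ω, ℤ)} ∩ C_c(Ω, ℕ) = {0}. -/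
/-! Both subgroups are generated by simple pieces. A function in `C_c(Ω, ℤ)` is an integer
combination of indicators `1_U` with `U` compact open and `T₁` (or `T₂`) injective on `U`, and then
`(T_i)_* 1_U = 1_{T_i U}`. Since `Z(T^n U, 0, n, U)` is a compact open bisection with source `U` and
range `T^n U` when `T^n` is injective on `U`, each `1_U - 1_{T_i U}` is a coboundary generator
(`indicator_sub_mem_cobGen`, `sub_Tstar_mem`).

Conversely, the sets `Z(U, m, n, V)` form a neighbourhood base of the groupoid
(`exists_Zset_subset`), so a compact open bisection `E` is a finite disjoint union of pieces of the
form `Z(U, m, n, V)` with `T^m` injective on `U`, `T^n` injective on `V` and `T^m U = T^n V`. Such a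
piece contributes `1_V - 1_U = (1_V - 1_{T^n V}) - (1_U - 1_{T^m U})`, and each bracket telescopes
into terms `1_W - (T_i)_* 1_W` (`indicator_sub_mem_MSub`).

Both decompositions into disjoint pieces are handled by the compactness principle
`exists_isCO_of_local`, for set functions that are additive on disjoint compact open sets. -/

open Set Function

/-- The topology on `G_T` generated by the sets `Z(U, m, n, V)` with `U, V ⊆ Ω`
compact open and `m, n ∈ ℕ²`. -/
def DRtopology {Ω : Type*} [TopologicalSpace Ω] (T₁ T₂ : Ω → Ω) :
    TopologicalSpace ↥(DR T₁ T₂) :=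
  TopologicalSpace.generateFrom
    {s | ∃ (U V : Set Ω) (m n : ℕ × ℕ), IsCompact U ∧ IsOpen U ∧ IsCompact V ∧ IsOpen V ∧
      s = Subtype.val ⁻¹' Zset T₁ T₂ U m n V}

/-- The set `{(1 − (T₁)_*) f + (1 − (T₂)_*) g : f, g ∈ C_c(Ω, ℤ)}`. -/
def MSet {X : Type*} [TopologicalSpace X] (T₁ T₂ : X → X) : Set (X → ℤ) :=
  {k | ∃ f g : X → ℤ, Continuous f ∧ HasCompactSupport f ∧
    Continuous g ∧ HasCompactSupport g ∧
    k = (f - Tstar T₁ f) + (g - Tstar T₂ g)}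

/-- `C_c(X, ℕ)`: continuous, compactly supported, nonnegative integer-valued functions. -/
def CcNN (X : Type*) [TopologicalSpace X] : Set (X → ℤ) :=
  {k | Continuous k ∧ HasCompactSupport k ∧ ∀ x, 0 ≤ k x}

/-- The generators `1_{s(E)} − 1_{r(E)}` of the coboundary subgroup `H_{G_T}`, where `E`
ranges over compact open bisections of `G_T` (compact open subsets on which both the
range map `r(x, k, y) = x` and the source map `s(x, k, y) = y` are injective). -/
def cobGen {Ω : Type*} [TopologicalSpace Ω] (T₁ T₂ : Ω → Ω) : Set (Ω → ℤ) :=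
  letI : TopologicalSpace ↥(DR T₁ T₂) := DRtopology T₁ T₂
  {k | ∃ E : Set ↥(DR T₁ T₂), IsCompact E ∧ IsOpen E ∧
    Set.InjOn (fun γ : ↥(DR T₁ T₂) => (γ : Ω × (ℤ × ℤ) × Ω).1) E ∧
    Set.InjOn (fun γ : ↥(DR T₁ T₂) => (γ : Ω × (ℤ × ℤ) × Ω).2.2) E ∧
    k = Set.indicator ((fun γ : ↥(DR T₁ T₂) => (γ : Ω × (ℤ × ℤ) × Ω).2.2) '' E) 1
      - Set.indicator ((fun γ : ↥(DR T₁ T₂) => (γ : Ω × (ℤ × ℤ) × Ω).1) '' E) 1}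

/-! ### Compact open sets -/

section CompactOpen

variable {Ω : Type*} [TopologicalSpace Ω]

/-- Compact open subsets. -/
def IsCO (U : Set Ω) : Prop := IsCompact U ∧ IsOpen U

lemma IsCO.union {U V : Set Ω} (hU : IsCO U) (hV : IsCO V) : IsCO (U ∪ V) :=
  ⟨hU.1.union hV.1, hU.2.union hV.2⟩

lemma IsCO.inter [T2Space Ω] {U V : Set Ω} (hU : IsCO U) (hV : IsCO V) : IsCO (U ∩ V) :=
  ⟨hU.1.inter hV.1, hU.2.inter hV.2⟩

lemma IsCO.inter_preimage [T2Space Ω] {T : Ω → Ω} (hT : Continuous T) {U V : Set Ω}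
    (hU : IsCO U) (hV : IsCO V) : IsCO (U ∩ T ⁻¹' V) :=
  ⟨hU.1.inter_right (hV.1.isClosed.preimage hT), hU.2.inter (hV.2.preimage hT)⟩

lemma IsCO.diff [T2Space Ω] {U V : Set Ω} (hU : IsCO U) (hV : IsCO V) : IsCO (U \ V) :=
  ⟨hU.1.diff hV.2, hU.2.sdiff hV.1.isClosed⟩

lemma IsCO.isClopen [T2Space Ω] {U : Set Ω} (hU : IsCO U) : IsClopen U :=
  ⟨hU.1.isClosed, hU.2⟩

lemma IsCO.image {T : Ω → Ω} (hT : IsLocalHomeomorph T) {U : Set Ω} (hU : IsCO U) :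
    IsCO (T '' U) :=
  ⟨hU.1.image hT.continuous, hT.isOpenMap _ hU.2⟩

variable [TotallyDisconnectedSpace Ω] [LocallyCompactSpace Ω] [T2Space Ω]

lemma exists_isCO {x : Ω} {O : Set Ω} (hO : IsOpen O) (hx : x ∈ O) :
    ∃ U, IsCO U ∧ x ∈ U ∧ U ⊆ O := by
  obtain ⟨K, hK, hxK, hKO⟩ := exists_compact_subset hO hx
  obtain ⟨U, hU, hxU, hUK⟩ :=
    (loc_compact_Haus_tot_disc_of_zero_dim (H := Ω)).mem_nhds_iff.1
      (isOpen_interior.mem_nhds hxK)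
  exact ⟨U, ⟨hK.of_isClosed_subset hU.1 (hUK.trans interior_subset), hU.2⟩, hxU,
    (hUK.trans interior_subset).trans hKO⟩

lemma exists_isCO_injOn {T : Ω → Ω} (hT : IsLocalHomeomorph T) {x : Ω} {O : Set Ω}
    (hO : IsOpen O) (hx : x ∈ O) :
    ∃ U, IsCO U ∧ x ∈ U ∧ U ⊆ O ∧ InjOn T U := by
  obtain ⟨W, hW, hxW, hinj⟩ := hT.isLocallyInjective x
  obtain ⟨U, hU, hxU, hUO⟩ := exists_isCO (hO.inter hW) ⟨hx, hxW⟩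
  exact ⟨U, hU, hxU, hUO.trans inter_subset_left, hinj.mono (hUO.trans inter_subset_right)⟩

end CompactOpen

/-- Local-to-global principle: if `D` is additive on disjoint compact open sets and its values
on the small compact open sets around each point of the compact set `K` lie in a subgroup `H`,
then some compact open set containing `s '' K` has its value in `H`. -/
lemma exists_isCO_of_local {X Ω : Type*} [TopologicalSpace X] [TopologicalSpace Ω] [T2Space Ω]
    {K : Set X} (hK : IsCompact K) (s : X → Ω) (D : Set Ω → (Ω → ℤ)) (H : AddSubgroup (Ω → ℤ))
    (hempty : D ∅ ∈ H)
    (hadd : ∀ A B, IsCO A → IsCO B → Disjoint A B → D (A ∪ B) = D A + D B)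
    (hloc : ∀ x ∈ K, ∃ N ∈ nhdsWithin x K, ∃ A, IsCO A ∧ s '' N ⊆ A ∧
      ∀ A', IsCO A' → A' ⊆ A → D A' ∈ H) :
    ∃ A, IsCO A ∧ s '' K ⊆ A ∧ D A ∈ H := by
  suffices h : ∃ A, IsCO A ∧ s '' K ⊆ A ∧ ∀ A', IsCO A' → A' ⊆ A → D A' ∈ H by
    obtain ⟨A, hA, hKA, h⟩ := h
    exact ⟨A, hA, hKA, h A hA subset_rfl⟩
  refine hK.induction_on (p := fun N => ∃ A, IsCO A ∧ s '' N ⊆ A ∧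
      ∀ A', IsCO A' → A' ⊆ A → D A' ∈ H) ?_ ?_ ?_ hloc
  · refine ⟨∅, ⟨isCompact_empty, isOpen_empty⟩, by simp, fun A' _ h => ?_⟩
    rw [subset_empty_iff.1 h]; exact hempty
  · rintro N N' hN ⟨A, hA, hNA, h⟩
    exact ⟨A, hA, (image_mono hN).trans hNA, h⟩
  · rintro N N' ⟨A, hA, hNA, h⟩ ⟨B, hB, hNB, h'⟩
    refine ⟨A ∪ B, hA.union hB, ?_, fun C hC hCAB => ?_⟩
    · rw [image_union]; exact union_subset_union hNA hNB
    · have := hadd (C ∩ A) (C \ A) (hC.inter hA) (hC.diff hA) disjoint_inf_sdiff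
      rw [inter_union_sdiff] at this
      rw [this]
      refine H.add_mem (h _ (hC.inter hA) inter_subset_right) (h' _ (hC.diff hA) ?_)
      rintro x ⟨hx, hx'⟩
      exact (hCAB hx).resolve_left hx'

/-! ### The pushforward `T_*` on compactly supported functions -/

lemma Tstar_neg {Ω : Type*} (T : Ω → Ω) (f : Ω → ℤ) : Tstar T (-f) = -Tstar T f := by
  funext y
  simp [Tstar, finsum_neg_distrib]

lemma Tstar_zero {Ω : Type*} (T : Ω → Ω) : Tstar T (0 : Ω → ℤ) = 0 := by
  funext y
  simp [Tstar]

/-- On a set where `T` is injective, `T_*` moves a constant function onto the image. -/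
lemma Tstar_indicator_const {Ω : Type*} {T : Ω → Ω} {U : Set Ω} (hU : InjOn T U) (c : ℤ) :
    Tstar T (U.indicator fun _ => c) = (T '' U).indicator fun _ => c := by
  classical
  funext y
  by_cases hy : y ∈ T '' U
  · obtain ⟨x, hx, rfl⟩ := hy
    rw [indicator_of_mem (mem_image_of_mem T hx), Tstar, finsum_mem_def,
      finsum_eq_single _ x]
    · simp [hx]
    · intro z hz
      by_cases hzT : T z = T x
      · have : z ∉ U := fun h => hz (hU h hx hzT)
        simp [this]
      · simp [hzT]
  · rw [indicator_of_notMem hy, Tstar, finsum_mem_def]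
    refine finsum_eq_zero_of_forall_eq_zero fun z => ?_
    by_cases hzT : T z = y
    · have : z ∉ U := fun h => hy ⟨z, h, hzT⟩
      simp [this]
    · simp [hzT]

section Pushforward

variable {Ω : Type*} [TopologicalSpace Ω] [T2Space Ω] {T : Ω → Ω}

lemma finite_fiber_inter_support (hT : IsLocalHomeomorph T) {f : Ω → ℤ}
    (hf : HasCompactSupport f) (y : Ω) : (T ⁻¹' {y} ∩ support f).Finite := by
  have hd : IsDiscrete (T ⁻¹' {y}) := by
    refine IsLocalHomeomorphOn.isDiscrete_of_image (f := T) (fun x _ => hT x) ?_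
    exact (subsingleton_singleton.anti (image_preimage_subset T {y})).isDiscrete
  have hc : IsCompact (tsupport f ∩ T ⁻¹' {y}) :=
    hf.isCompact.inter_right (isClosed_singleton.preimage hT.continuous)
  exact (hc.finite (hd.mono inter_subset_right)).subset
    fun x hx => ⟨subset_tsupport f hx.2, hx.1⟩

lemma Tstar_add (hT : IsLocalHomeomorph T) {f g : Ω → ℤ}
    (hf : HasCompactSupport f) (hg : HasCompactSupport g) :
    Tstar T (f + g) = Tstar T f + Tstar T g := by
  funext y
  exact finsum_mem_add_distrib' (finite_fiber_inter_support hT hf y)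
    (finite_fiber_inter_support hT hg y)

lemma hasCompactSupport_indicator {f : Ω → ℤ} {A : Set Ω} (hA : IsCO A) :
    HasCompactSupport (A.indicator f) :=
  HasCompactSupport.intro hA.1 fun _ hx => indicator_of_notMem hx f

/-- The subset `MSet T₁ T₂`, as a subgroup. -/
def MSub {T₁ T₂ : Ω → Ω} (hl₁ : IsLocalHomeomorph T₁) (hl₂ : IsLocalHomeomorph T₂) :
    AddSubgroup (Ω → ℤ) where
  carrier := MSet T₁ T₂
  zero_mem' := ⟨0, 0, continuous_const, HasCompactSupport.zero, continuous_const,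
    HasCompactSupport.zero, by simp [Tstar_zero]⟩
  add_mem' := by
    rintro _ _ ⟨f, g, hf, hf', hg, hg', rfl⟩ ⟨f₁, g₁, h1, h2, h3, h4, rfl⟩
    refine ⟨f + f₁, g + g₁, hf.add h1, hf'.add h2, hg.add h3, hg'.add h4, ?_⟩
    rw [Tstar_add hl₁ hf' h2, Tstar_add hl₂ hg' h4]
    abel
  neg_mem' := by
    rintro _ ⟨f, g, hf, hf', hg, hg', rfl⟩
    refine ⟨-f, -g, hf.neg, hf'.neg, hg.neg, hg'.neg, ?_⟩
    rw [Tstar_neg, Tstar_neg]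
    abel

end Pushforward

/-! ### The iterates `T^m` -/

section Iterates

variable {Ω : Type*} {T₁ T₂ : Ω → Ω}

lemma isLocalHomeomorph_iterate_s9 [TopologicalSpace Ω] {T : Ω → Ω} (hT : IsLocalHomeomorph T)
    (k : ℕ) : IsLocalHomeomorph T^[k] := by
  induction k with
  | zero => exact (Homeomorph.refl Ω).isLocalHomeomorph
  | succ k ih => exact ih.comp hT

end Iterates

/-! ### Each `1_U - 1_{T^m U}` lies in the left-hand subgroup -/

section Telescope

variable {Ω : Type*} [TopologicalSpace Ω] {T₁ T₂ : Ω → Ω}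

/-- Telescoping along the iterates of a single map. -/
lemma indicator_sub_iterate_mem {T : Ω → Ω} (hT : IsLocalHomeomorph T) (H : AddSubgroup (Ω → ℤ))
    (h1 : ∀ U, IsCO U → InjOn T U →
      U.indicator (1 : Ω → ℤ) - (T '' U).indicator (1 : Ω → ℤ) ∈ H)
    (k : ℕ) {U : Set Ω} (hU : IsCO U) (hinj : InjOn T^[k] U) :
    U.indicator (1 : Ω → ℤ) - (T^[k] '' U).indicator (1 : Ω → ℤ) ∈ H := by
  induction k generalizing U with
  | zero => simp
  | succ k ih =>
    rw [iterate_succ] at hinj ⊢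
    have hT1 : InjOn T U := fun x hx y hy h => hinj hx hy (congrArg T^[k] h)
    have h2 := ih (hU.image hT) hinj.image_of_comp
    rw [← image_comp] at h2
    simpa using H.add_mem (h1 U hU hT1) h2

lemma indicator_sub_mem_MSub [T2Space Ω] (hl₁ : IsLocalHomeomorph T₁) (hl₂ : IsLocalHomeomorph T₂)
    (m : ℕ × ℕ) {U : Set Ω} (hU : IsCO U) (hinj : InjOn (Tpow T₁ T₂ m) U) :
    U.indicator (1 : Ω → ℤ) - (Tpow T₁ T₂ m '' U).indicator (1 : Ω → ℤ) ∈ MSub hl₁ hl₂ := by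
  have hc (U : Set Ω) (hU : IsCO U) : Continuous (U.indicator (1 : Ω → ℤ)) :=
    continuous_one.indicator (by simp [hU.isClopen.frontier_eq])
  have a1 : ∀ U, IsCO U → InjOn T₁ U →
      U.indicator (1 : Ω → ℤ) - (T₁ '' U).indicator (1 : Ω → ℤ) ∈ MSub hl₁ hl₂ :=
    fun U hU hi => ⟨U.indicator 1, 0, hc U hU, hasCompactSupport_indicator hU, continuous_const,
      HasCompactSupport.zero, by
        rw [Tstar_zero]
        change _ = U.indicator 1 - Tstar T₁ (U.indicator fun _ => 1) + _
        rw [Tstar_indicator_const hi]; simp; rfl⟩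
  have a2 : ∀ U, IsCO U → InjOn T₂ U →
      U.indicator (1 : Ω → ℤ) - (T₂ '' U).indicator (1 : Ω → ℤ) ∈ MSub hl₁ hl₂ :=
    fun U hU hi => ⟨0, U.indicator 1, continuous_const,
      HasCompactSupport.zero, hc U hU, hasCompactSupport_indicator hU, by
        rw [Tstar_zero]
        change _ = _ + (U.indicator 1 - Tstar T₂ (U.indicator fun _ => 1))
        rw [Tstar_indicator_const hi]; simp; rfl⟩
  have h2 : InjOn T₂^[m.2] U := fun x hx y hy h => hinj hx hy (congrArg T₁^[m.1] h)
  have b2 := indicator_sub_iterate_mem hl₂ _ a2 m.2 hU h2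
  have b1 := indicator_sub_iterate_mem hl₁ _ a1 m.1
    (hU.image (isLocalHomeomorph_iterate_s9 hl₂ m.2)) (InjOn.image_of_comp hinj)
  rw [← image_comp] at b1
  simpa [Tpow] using (MSub hl₁ hl₂).add_mem b2 b1

end Telescope

/-! ### The topology of the groupoid -/

section Groupoid

open scoped Topology

variable {Ω : Type*} [TopologicalSpace Ω] {T₁ T₂ : Ω → Ω}

lemma isOpen_Zset {U V : Set Ω} (hU : IsCO U) (hV : IsCO V) (m n : ℕ × ℕ) :
    IsOpen[DRtopology T₁ T₂] (Subtype.val ⁻¹' Zset T₁ T₂ U m n V : Set ↥(DR T₁ T₂)) :=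
  TopologicalSpace.isOpen_generateFrom_of_mem ⟨U, V, m, n, hU.1, hU.2, hV.1, hV.2, rfl⟩

/-- For any pair `(m, n)` with `m - n` the degree of `γ`, every neighbourhood of `γ` contains
`Z(U, m, n, V)` for some compact open `U ∋ r(γ)` and `V ∋ s(γ)`. In particular these sets form a
neighbourhood base at `γ` as soon as `T^m r(γ) = T^n s(γ)`. The point is that if
`γ ∈ Z(U', m', n', V')` has the same degree, then `Z(U, m, n, V) ⊆ Z(U', m', n', V')` for small
`U` and `V`, because `T^{m ⊔ m' - m'}` is locally injective. -/
lemma exists_Zset_subset [TotallyDisconnectedSpace Ω] [LocallyCompactSpace Ω] [T2Space Ω]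
    (hl₁ : IsLocalHomeomorph T₁) (hl₂ : IsLocalHomeomorph T₂)
    (hcomm : ∀ x, T₁ (T₂ x) = T₂ (T₁ x)) {O : Set ↥(DR T₁ T₂)}
    (hO : IsOpen[DRtopology T₁ T₂] O) (γ : ↥(DR T₁ T₂)) (hγ : γ ∈ O) (m n : ℕ × ℕ)
    (hd : γ.1.2.1 = ((m.1 : ℤ) - (n.1 : ℤ), (m.2 : ℤ) - (n.2 : ℤ))) :
    ∃ U V, IsCO U ∧ IsCO V ∧ γ.1.1 ∈ U ∧ γ.1.2.2 ∈ V ∧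
      Subtype.val ⁻¹' Zset T₁ T₂ U m n V ⊆ O := by
  induction hO with
  | basic s hs =>
    obtain ⟨U', V', m', n', hU', hU'o, hV', hV'o, rfl⟩ := hs
    obtain ⟨hxU, hyV, hd', he'⟩ := hγ
    obtain ⟨p, q, hpq⟩ : ∃ p q : ℕ × ℕ, p + m = q + m' ∧ p + n = q + n' := by
      rw [hd] at hd'
      simp only [Prod.mk.injEq] at hd'
      -- `p = (m ⊔ m') - m` and `q = (m ⊔ m') - m'`, by truncated subtraction
      refine ⟨(m'.1 - m.1, m'.2 - m.2), (m.1 - m'.1, m.2 - m'.2), ?_, ?_⟩ <;>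
        ext <;> simp <;> omega
    obtain ⟨W, hW, hxW, -, hinj⟩ := exists_isCO_injOn (isLocalHomeomorph_Tpow hl₁ hl₂ q)
      isOpen_univ (mem_univ (Tpow T₁ T₂ m' γ.1.1))
    refine ⟨U' ∩ Tpow T₁ T₂ m' ⁻¹' W, V' ∩ Tpow T₁ T₂ n' ⁻¹' W,
      IsCO.inter_preimage (isLocalHomeomorph_Tpow hl₁ hl₂ _).continuous ⟨hU', hU'o⟩ hW,
      IsCO.inter_preimage (isLocalHomeomorph_Tpow hl₁ hl₂ _).continuous ⟨hV', hV'o⟩ hW,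
      ⟨hxU, hxW⟩, ⟨hyV, by rw [mem_preimage, ← he']; exact hxW⟩, ?_⟩
    rintro δ ⟨⟨h1, h1'⟩, ⟨h2, h2'⟩, h3, h4⟩
    refine ⟨h1, h2, h3.trans (hd.symm.trans hd'), hinj h1' h2' ?_⟩
    rw [← Tpow_add hcomm, ← Tpow_add hcomm, ← hpq.1, ← hpq.2, Tpow_add hcomm, Tpow_add hcomm, h4]
  | univ =>
    obtain ⟨U, hU, hx, -⟩ := exists_isCO isOpen_univ (mem_univ γ.1.1)
    obtain ⟨V, hV, hy, -⟩ := exists_isCO isOpen_univ (mem_univ γ.1.2.2)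
    exact ⟨U, V, hU, hV, hx, hy, subset_univ _⟩
  | inter s t _ _ ihs iht =>
    obtain ⟨U, V, hU, hV, hx, hy, h⟩ := ihs hγ.1
    obtain ⟨U', V', hU', hV', hx', hy', h'⟩ := iht hγ.2
    refine ⟨U ∩ U', V ∩ V', hU.inter hU', hV.inter hV', ⟨hx, hx'⟩, ⟨hy, hy'⟩, ?_⟩
    rintro δ ⟨h1, h2, h3⟩
    exact ⟨h ⟨h1.1, h2.1, h3⟩, h' ⟨h1.2, h2.2, h3⟩⟩
  | sUnion S _ ih =>
    obtain ⟨s, hs, hγs⟩ := hγ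
    obtain ⟨U, V, hU, hV, hx, hy, h⟩ := ih s hs hγs
    exact ⟨U, V, hU, hV, hx, hy, h.trans (subset_sUnion_of_mem hs)⟩

/-- The bisection witnessing membership is `Z(T^n U, 0, n, U) = {(T^n y, -n, y) : y ∈ U}`, the image
of `U` under the continuous map `y ↦ (T^n y, -n, y)`. -/
lemma indicator_sub_mem_cobGen (hl₁ : IsLocalHomeomorph T₁) (hl₂ : IsLocalHomeomorph T₂)
    (hcomm : ∀ x, T₁ (T₂ x) = T₂ (T₁ x)) (n : ℕ × ℕ) {U : Set Ω} (hU : IsCO U)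
    (hinj : InjOn (Tpow T₁ T₂ n) U) :
    U.indicator (1 : Ω → ℤ) - (Tpow T₁ T₂ n '' U).indicator (1 : Ω → ℤ) ∈ cobGen T₁ T₂ := by
  let _ : TopologicalSpace ↥(DR T₁ T₂) := DRtopology T₁ T₂
  let φ : Ω → ↥(DR T₁ T₂) := fun y =>
    ⟨(Tpow T₁ T₂ n y, (-(n.1 : ℤ), -(n.2 : ℤ)), y), (0, 0), n, by simp, by simp [Tpow]⟩
  have hφ : Continuous φ := by
    refine continuous_generateFrom_iff.2 ?_
    rintro _ ⟨A, B, a, b, -, hA, -, hB, rfl⟩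
    by_cases hab : b = a + n
    · have : φ ⁻¹' (Subtype.val ⁻¹' Zset T₁ T₂ A a b B) = Tpow T₁ T₂ n ⁻¹' A ∩ B := by
        ext y
        simp [φ, Zset, hab, Tpow_add hcomm]
      rw [this]
      exact (hA.preimage (isLocalHomeomorph_Tpow hl₁ hl₂ n).continuous).inter hB
    · have : φ ⁻¹' (Subtype.val ⁻¹' Zset T₁ T₂ A a b B) = ∅ := by
        refine eq_empty_of_forall_notMem ?_
        rintro y ⟨-, -, h, -⟩
        simp only [φ, Prod.mk.injEq] at h
        refine hab (Prod.ext ?_ ?_) <;> simp <;> omega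
      rw [this]
      exact isOpen_empty
  have hE : φ '' U = Subtype.val ⁻¹' Zset T₁ T₂ (Tpow T₁ T₂ n '' U) (0, 0) n U := by
    ext γ
    constructor
    · rintro ⟨y, hy, rfl⟩
      exact ⟨mem_image_of_mem _ hy, hy, by simp [φ], by simp [φ, Tpow]⟩
    · rintro ⟨-, h2, h3, h4⟩
      refine ⟨γ.1.2.2, h2, Subtype.ext (Prod.ext ?_ (Prod.ext ?_ rfl))⟩
      · simpa [φ, Tpow] using h4.symm
      · simp [φ, h3]
  refine ⟨φ '' U, hU.1.image hφ, ?_, ?_, ?_, ?_⟩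
  · rw [hE]
    exact isOpen_Zset (hU.image (isLocalHomeomorph_Tpow hl₁ hl₂ n)) hU _ _
  · rintro _ ⟨y, hy, rfl⟩ _ ⟨z, hz, rfl⟩ h
    rw [hinj hy hz h]
  · rintro _ ⟨y, hy, rfl⟩ _ ⟨z, hz, rfl⟩ h
    exact congrArg φ h
  · rw [image_image, image_image]
    simp [φ]

end Groupoid

/-! ### The two inclusions -/

lemma disjoint_image_of_injOn {X Y : Type*} {f : X → Y} {E A B : Set X} (hf : InjOn f E)
    (h : Disjoint (E ∩ A) (E ∩ B)) : Disjoint (f '' (E ∩ A)) (f '' (E ∩ B)) := by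
  rw [Set.disjoint_left] at h ⊢
  rintro _ ⟨x, hx, rfl⟩ ⟨y, hy, hxy⟩
  exact h hx (hf hy.1 hx.1 hxy ▸ hy)

lemma indicator_union_add {Ω : Type*} {A B : Set Ω} (h : Disjoint A B) (f : Ω → ℤ) :
    (A ∪ B).indicator f = A.indicator f + B.indicator f :=
  indicator_union_of_disjoint h f

section Inclusions

variable {Ω : Type*} [TopologicalSpace Ω] [TotallyDisconnectedSpace Ω] [LocallyCompactSpace Ω]
  [T2Space Ω] {T₁ T₂ : Ω → Ω}

/-- This reduces to indicators, since a function in `C_c(Ω, ℤ)` is a finite integer combination of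
indicators of compact open sets on which `T` is injective. -/
lemma sub_Tstar_mem {T : Ω → Ω} (hT : IsLocalHomeomorph T) (H : AddSubgroup (Ω → ℤ))
    (hH : ∀ U, IsCO U → InjOn T U →
      U.indicator (1 : Ω → ℤ) - (T '' U).indicator (1 : Ω → ℤ) ∈ H)
    {f : Ω → ℤ} (hf : Continuous f) (hfc : HasCompactSupport f) :
    f - Tstar T f ∈ H := by
  obtain ⟨A, hA, hKA, h⟩ := exists_isCO_of_local hfc.isCompact id
    (fun A => A.indicator f - Tstar T (A.indicator f)) H
    (by rw [indicator_empty', Tstar_zero, sub_zero]; exact H.zero_mem)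
    (fun A B hA hB hAB => by
      rw [indicator_union_add hAB f, Tstar_add hT (hasCompactSupport_indicator hA)
        (hasCompactSupport_indicator hB)]
      abel)
    (fun x hx => by
      obtain ⟨A, hA, hxA, hAf, hinj⟩ := exists_isCO_injOn hT
        ((isOpen_discrete {f x}).preimage hf) (mem_singleton (f x))
      refine ⟨A, mem_nhdsWithin_of_mem_nhds (hA.2.mem_nhds hxA), A, hA, by simp,
        fun A' hA' hAA' => ?_⟩
      have e : A'.indicator f = A'.indicator fun _ => f x :=
        indicator_congr fun y hy => hAf (hAA' hy)
      rw [e, Tstar_indicator_const (hinj.mono hAA')]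
      convert H.zsmul_mem (hH A' hA' (hinj.mono hAA')) (f x) using 1
      funext y
      simp [indicator, mul_sub])
  have e : A.indicator f = f := by
    rw [indicator_eq_self]
    exact (subset_tsupport f).trans (by simpa using hKA)
  simpa only [e] using h

lemma MSet_subset_closure (hl₁ : IsLocalHomeomorph T₁) (hl₂ : IsLocalHomeomorph T₂)
    (hcomm : ∀ x, T₁ (T₂ x) = T₂ (T₁ x)) :
    MSet T₁ T₂ ⊆ (AddSubgroup.closure (cobGen T₁ T₂) : Set (Ω → ℤ)) := by
  rintro _ ⟨f, g, hf, hf', hg, hg', rfl⟩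
  refine AddSubgroup.add_mem _ (sub_Tstar_mem hl₁ _ (fun U hU hi => ?_) hf hf')
    (sub_Tstar_mem hl₂ _ (fun U hU hi => ?_) hg hg')
  · exact AddSubgroup.subset_closure (indicator_sub_mem_cobGen hl₁ hl₂ hcomm (1, 0) hU hi)
  · exact AddSubgroup.subset_closure (indicator_sub_mem_cobGen hl₁ hl₂ hcomm (0, 1) hU hi)

/-- Near each of its points, a compact open bisection `E` is a set `Z(U, m, n, V)` with `T^m` injective on
`U` and `T^n` injective on `V`. For compact open `A` inside its source, the part of `E` over `A`
then has range `U' ⊆ U` with `T^m U' = T^n A`. -/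
lemma cobGen_subset_MSub (hl₁ : IsLocalHomeomorph T₁) (hl₂ : IsLocalHomeomorph T₂)
    (hcomm : ∀ x, T₁ (T₂ x) = T₂ (T₁ x)) :
    cobGen T₁ T₂ ⊆ (MSub hl₁ hl₂ : Set (Ω → ℤ)) := by
  let _ : TopologicalSpace ↥(DR T₁ T₂) := DRtopology T₁ T₂
  rintro _ ⟨E, hEc, hEo, hr, hs, rfl⟩
  set r : ↥(DR T₁ T₂) → Ω := fun γ => γ.1.1 with hrdef
  set s : ↥(DR T₁ T₂) → Ω := fun γ => γ.1.2.2 with hsdef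
  have hP (m : ℕ × ℕ) := isLocalHomeomorph_Tpow hl₁ hl₂ m
  obtain ⟨A, hA, hKA, h⟩ := exists_isCO_of_local hEc s
    (fun A => (s '' (E ∩ s ⁻¹' A)).indicator (1 : Ω → ℤ) - (r '' (E ∩ s ⁻¹' A)).indicator 1)
    (MSub hl₁ hl₂) (by simp)
    (fun A B hA hB hAB => by
      have hdis : Disjoint (E ∩ s ⁻¹' A) (E ∩ s ⁻¹' B) :=
        (hAB.preimage s).mono inter_subset_right inter_subset_right
      rw [preimage_union, inter_union_distrib_left, image_union, image_union,
        indicator_union_add (disjoint_image_of_injOn hs hdis) _,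
        indicator_union_add (disjoint_image_of_injOn hr hdis) _]
      abel)
    (fun γ hγ => by
      obtain ⟨m, n, hd, he⟩ := γ.2
      obtain ⟨U₁, V₁, hU₁, hV₁, hx₁, hy₁, hZ⟩ :=
        exists_Zset_subset hl₁ hl₂ hcomm hEo γ hγ m n hd
      obtain ⟨U, hU, hxU, hUU, hUi⟩ := exists_isCO_injOn (hP m) hU₁.2 hx₁
      obtain ⟨V, hV, hyV, hVV, hVi⟩ := exists_isCO_injOn (hP n) hV₁.2 hy₁
      have hWE : Subtype.val ⁻¹' Zset T₁ T₂ U m n V ⊆ E := fun δ hδ =>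
        hZ ⟨hUU hδ.1, hVV hδ.2.1, hδ.2.2⟩
      refine ⟨Subtype.val ⁻¹' Zset T₁ T₂ U m n V,
        mem_nhdsWithin_of_mem_nhds ((isOpen_Zset hU hV m n).mem_nhds ⟨hxU, hyV, hd, he⟩),
        V ∩ Tpow T₁ T₂ n ⁻¹' (Tpow T₁ T₂ m '' U),
        hV.inter_preimage (hP n).continuous (hU.image (hP m)), ?_, fun A hA hAV => ?_⟩
      · rintro _ ⟨δ, hδ, rfl⟩
        exact ⟨hδ.2.1, δ.1.1, hδ.1, hδ.2.2.2⟩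
      -- every point of `A` is the source of an arrow of `E` lying in `Z(U, m, n, V)`
      have key : ∀ y ∈ A, ∀ x ∈ U, Tpow T₁ T₂ m x = Tpow T₁ T₂ n y →
          ∃ δ ∈ E ∩ s ⁻¹' A, s δ = y ∧ r δ = x := fun y hy x hx hxy =>
        ⟨⟨(x, ((m.1 : ℤ) - (n.1 : ℤ), (m.2 : ℤ) - (n.2 : ℤ)), y), m, n, rfl, hxy⟩,
          ⟨hWE ⟨hx, (hAV hy).1, rfl, hxy⟩, hy⟩, rfl, rfl⟩
      have hsA : s '' (E ∩ s ⁻¹' A) = A := by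
        ext y
        constructor
        · rintro ⟨δ, hδ, rfl⟩
          exact hδ.2
        · intro hy
          obtain ⟨x, hx, hxy⟩ := (hAV hy).2
          obtain ⟨δ, hδ, hδy, -⟩ := key y hy x hx hxy
          exact ⟨δ, hδ, hδy⟩
      have hrA : r '' (E ∩ s ⁻¹' A) = U ∩ Tpow T₁ T₂ m ⁻¹' (Tpow T₁ T₂ n '' A) := by
        ext x
        constructor
        · rintro ⟨δ, ⟨hδE, hδA⟩, rfl⟩
          obtain ⟨x, hx, hxy⟩ := (hAV hδA).2
          obtain ⟨δ', hδ', hδy, rfl⟩ := key _ hδA x hx hxy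
          have : δ' = δ := hs hδ'.1 hδE hδy
          subst this
          exact ⟨hx, s δ', hδA, hxy.symm⟩
        · rintro ⟨hx, y, hy, hxy⟩
          obtain ⟨δ, hδ, -, hδx⟩ := key y hy x hx hxy.symm
          exact ⟨δ, hδ, hδx⟩
      have himg : Tpow T₁ T₂ m '' (U ∩ Tpow T₁ T₂ m ⁻¹' (Tpow T₁ T₂ n '' A)) =
          Tpow T₁ T₂ n '' A := by
        rw [image_inter_preimage, inter_eq_right]
        rintro _ ⟨y, hy, rfl⟩
        exact (hAV hy).2
      have h1 := indicator_sub_mem_MSub hl₁ hl₂ n hA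
        (hVi.mono (hAV.trans inter_subset_left))
      have h2 := indicator_sub_mem_MSub hl₁ hl₂ m
        (hU.inter_preimage (hP m).continuous (hA.image (hP n)))
        (hUi.mono inter_subset_left)
      rw [himg] at h2
      rw [hsA, hrA]
      simpa using (MSub hl₁ hl₂).sub_mem h1 h2)
  have e : E ∩ s ⁻¹' A = E := inter_eq_left.2 (image_subset_iff.1 hKA)
  rw [e] at h
  exact h

end Inclusions

/-- The subgroup `{(1 − (T₁)_*) f + (1 − (T₂)_*) g : f, g ∈ C_c(Ω, ℤ)}`
equals the coboundary subgroup `H_{G_T}` generated by the functions `1_{s(E)} − 1_{r(E)}`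
for `E` a compact open bisection of `G_T`.  Consequently `G_T` satisfies the coboundary
condition `H_{G_T} ∩ C_c(Ω, ℕ) = {0}` if and only if `(Ω, T₁, T₂)` satisfies the
generalised matrix condition. -/
theorem stmt9 {Ω : Type*} [TopologicalSpace Ω] [SecondCountableTopology Ω]
    [TotallyDisconnectedSpace Ω] [LocallyCompactSpace Ω] [T2Space Ω]
    (T₁ T₂ : Ω → Ω)
    (hs₁ : Function.Surjective T₁) (hs₂ : Function.Surjective T₂)
    (hl₁ : IsLocalHomeomorph T₁) (hl₂ : IsLocalHomeomorph T₂)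
    (hcomm : ∀ x, T₁ (T₂ x) = T₂ (T₁ x)) :
    MSet T₁ T₂ = (AddSubgroup.closure (cobGen T₁ T₂) : Set (Ω → ℤ)) ∧
    (((AddSubgroup.closure (cobGen T₁ T₂) : Set (Ω → ℤ)) ∩ CcNN Ω = {0}) ↔
      (MSet T₁ T₂ ∩ CcNN Ω = {0})) := by
  have h : MSet T₁ T₂ = (AddSubgroup.closure (cobGen T₁ T₂) : Set (Ω → ℤ)) :=
    (MSet_subset_closure hl₁ hl₂ hcomm).antisymm
      ((AddSubgroup.closure_le (MSub hl₁ hl₂)).2 (cobGen_subset_MSub hl₁ hl₂ hcomm))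
  exact ⟨h, by rw [h]⟩
end

section
/- Let i ∈ {1, 2} and let U ⊆ Ω be a compact open set on which T_i is injective. Then the set E = Z(T_i(U), 0, e_i, U) = {(T_i(y), −e_i, y) : y ∈ U} is a compact open subset of G_T on which both r and s are injective, with s(E) = U and r(E) = T_i(U); consequently 1_{s(E)} − 1_{r(E)} = (1 − (T_i)_*)(1_U). -/
/-!
The generator map extends to a global section `σ y = (Tᵢ y, -eᵢ, y)` of the source map, and
`E = σ(U)`.

* `σ` is continuous (`continuous_shiftSection`): the preimage of a basic set `Z(A, m, n, B)` is empty
  unless `m - n = -eᵢ`. If `n = m + eᵢ`, commutation of `T₁` and `T₂` gives `T^n y = T^m (Tᵢ y)` for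
  every `y`, so the preimage is the open set `Tᵢ⁻¹(A) ∩ B`. Hence `E = σ(U)` is compact.
* `E` is open because `Tᵢ(U)` is compact open, so `E` is itself one of the generating sets.
* Injectivity of `s` on `E` is clear as `s ∘ σ = id`, and that of `r` is injectivity of `Tᵢ` on `U`.
* Injectivity of `Tᵢ` on `U` also gives `(Tᵢ)_* 1_U = 1_{Tᵢ(U)}` (`Tstar_indicator`), which is the
  final identity.
-/

open Set Function

/-- `T^(m + eᵢ) = T^m ∘ Tᵢ`. -/
theorem Tpow_add_generator {Ω : Type*} {T₁ T₂ : Ω → Ω}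
    (hcomm : ∀ x, T₁ (T₂ x) = T₂ (T₁ x)) {Ti : Ω → Ω} {en : ℕ × ℕ}
    (hi : (Ti = T₁ ∧ en = (1, 0)) ∨ (Ti = T₂ ∧ en = (0, 1))) (m : ℕ × ℕ) (y : Ω) :
    Tpow T₁ T₂ (m + en) y = Tpow T₁ T₂ m (Ti y) := by
  have hc : Function.Commute T₁ T₂ := hcomm
  rcases hi with ⟨rfl, rfl⟩ | ⟨rfl, rfl⟩
  · have h := hc.iterate_right m.2 y
    simp only [Tpow, Prod.fst_add, Prod.snd_add, Function.comp_apply, add_zero,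
      Function.iterate_succ_apply]
    rw [h]
  · simp [Tpow]

/-- The map `y ↦ (Tᵢ y, -eᵢ, y)`, a section of the source map of the groupoid. The hypothesis
`h` is the relation `T^(m + e) = T^m ∘ Tᵢ`, used only at `m = 0`. -/
def shiftSection {Ω : Type*} (T₁ T₂ Ti : Ω → Ω) (en : ℕ × ℕ)
    (h : ∀ m y, Tpow T₁ T₂ (m + en) y = Tpow T₁ T₂ m (Ti y)) (y : Ω) : ↥(DR T₁ T₂) :=
  ⟨(Ti y, (-(en.1 : ℤ), -(en.2 : ℤ)), y), 0, en, by simp, by simpa using (h 0 y).symm⟩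

theorem continuous_shiftSection {Ω : Type*} [TopologicalSpace Ω] {T₁ T₂ Ti : Ω → Ω}
    {en : ℕ × ℕ} (h : ∀ m y, Tpow T₁ T₂ (m + en) y = Tpow T₁ T₂ m (Ti y))
    (hTi : Continuous Ti) :
    @Continuous _ _ _ (DRtopology T₁ T₂) (shiftSection T₁ T₂ Ti en h) := by
  refine continuous_generateFrom_iff.2 ?_
  rintro _ ⟨A, B, m, n, -, hA, -, hB, rfl⟩
  by_cases hmn : n = m + en
  · convert (hA.preimage hTi).inter hB using 1
    ext y
    subst hmn
    simp [shiftSection, Zset, h]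
  · convert isOpen_empty using 1
    refine Set.eq_empty_of_forall_notMem fun y hy => hmn ?_
    obtain ⟨-, -, hk, -⟩ := hy
    simp only [shiftSection, Prod.mk.injEq] at hk
    ext
    · simp only [Prod.fst_add]; omega
    · simp only [Prod.snd_add]; omega

/-- If `T` is injective on `U` then `T_* 1_U = 1_{T(U)}`: each fibre meets `U` in at most one
point. -/
theorem Tstar_indicator {X Y : Type*} {T : X → Y} {U : Set X} (hinj : Set.InjOn T U) :
    Tstar T (Set.indicator U 1) = Set.indicator (T '' U) 1 := by
  classical
  funext z
  by_cases hz : z ∈ T '' U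
  · obtain ⟨y, hy, rfl⟩ := hz
    rw [Set.indicator_of_mem (Set.mem_image_of_mem T hy)]
    have : Tstar T (Set.indicator U 1) (T y) = ∑ᶠ x, if x = y then (1 : ℤ) else 0 := by
      refine finsum_congr fun x => ?_
      rw [finsum_eq_if]
      by_cases hxy : x = y
      · subst hxy; simp [hy]
      · rw [if_neg hxy]
        split_ifs with hx
        · exact Set.indicator_of_notMem (fun hxU => hxy (hinj hxU hy hx)) _
        · rfl
    rw [this, finsum_eq_single _ y (fun x hx => if_neg hx), if_pos rfl]
    rfl
  · rw [Set.indicator_of_notMem hz]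
    refine finsum_mem_of_eqOn_zero fun x hx => ?_
    exact Set.indicator_of_notMem (fun hxU => hz ⟨x, hxU, hx⟩) _

/-- Let `i ∈ {1, 2}` (encoded by a map `Ti` with generator `eᵢ`,
where `(Ti, eᵢ) = (T₁, (1,0))` or `(T₂, (0,1))`) and let `U ⊆ Ω` be a compact open set
on which `Ti` is injective.  Then `E = Z(Ti(U), 0, eᵢ, U) = {(Ti y, −eᵢ, y) : y ∈ U}` is
a compact open subset of `G_T` on which both `r` and `s` are injective, with
`s(E) = U` and `r(E) = Ti(U)`; consequently `1_{s(E)} − 1_{r(E)} = (1 − (Ti)_*)(1_U)`. -/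
theorem stmt10 {Ω : Type*} [TopologicalSpace Ω] [SecondCountableTopology Ω]
    [TotallyDisconnectedSpace Ω] [LocallyCompactSpace Ω] [T2Space Ω]
    (T₁ T₂ : Ω → Ω)
    (hs₁ : Function.Surjective T₁) (hs₂ : Function.Surjective T₂)
    (hl₁ : IsLocalHomeomorph T₁) (hl₂ : IsLocalHomeomorph T₂)
    (hcomm : ∀ x, T₁ (T₂ x) = T₂ (T₁ x))
    (Ti : Ω → Ω) (en : ℕ × ℕ)
    (hi : (Ti = T₁ ∧ en = (1, 0)) ∨ (Ti = T₂ ∧ en = (0, 1)))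
    (U : Set Ω) (hUc : IsCompact U) (hUo : IsOpen U) (hinj : Set.InjOn Ti U) :
    letI : TopologicalSpace ↥(DR T₁ T₂) := DRtopology T₁ T₂
    let r : ↥(DR T₁ T₂) → Ω := fun γ => (γ : Ω × (ℤ × ℤ) × Ω).1
    let s : ↥(DR T₁ T₂) → Ω := fun γ => (γ : Ω × (ℤ × ℤ) × Ω).2.2
    let E : Set ↥(DR T₁ T₂) :=
      {γ | (γ : Ω × (ℤ × ℤ) × Ω) ∈ Zset T₁ T₂ (Ti '' U) (0, 0) en U}
    Subtype.val '' E = {γ : Ω × (ℤ × ℤ) × Ω |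
        ∃ y ∈ U, γ = (Ti y, (-(en.1 : ℤ), -(en.2 : ℤ)), y)} ∧
    IsCompact E ∧ IsOpen E ∧
    Set.InjOn r E ∧ Set.InjOn s E ∧
    s '' E = U ∧ r '' E = Ti '' U ∧
    Set.indicator (s '' E) 1 - Set.indicator (r '' E) 1 =
      Set.indicator U 1 - Tstar Ti (Set.indicator U 1) := by
  intro r s E
  have hT := Tpow_add_generator hcomm hi
  have hTi : IsLocalHomeomorph Ti := by
    rcases hi with ⟨rfl, -⟩ | ⟨rfl, -⟩ <;> assumption
  have hE : E = shiftSection T₁ T₂ Ti en hT '' U := by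
    ext ⟨⟨x, k, y⟩, hγ⟩
    have h0 : Tpow T₁ T₂ en y = Ti y := by simpa [Tpow] using hT 0 y
    constructor
    · rintro ⟨-, hy, hk, hxy⟩
      have hx : x = Ti y := by rw [← h0]; exact hxy
      refine ⟨y, hy, Subtype.ext ?_⟩
      have hk' : k = (-(en.1 : ℤ), -(en.2 : ℤ)) := by simpa using hk
      simp [shiftSection, hx, hk']
    · rintro ⟨z, hz, hzγ⟩
      have := congrArg Subtype.val hzγ
      simp only [shiftSection, Prod.mk.injEq] at this
      obtain ⟨rfl, rfl, rfl⟩ := this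
      exact ⟨⟨z, hz, rfl⟩, hz, by simp, h0.symm⟩
  have hsE : s '' E = U := by
    rw [hE, Set.image_image]
    exact Set.image_id' U
  have hrE : r '' E = Ti '' U := by
    rw [hE, Set.image_image]
    rfl
  refine ⟨?_, ?_, ?_, ?_, ?_, hsE, hrE, ?_⟩
  · rw [hE, Set.image_image]
    ext γ
    exact exists_congr fun y => and_congr_right fun _ => eq_comm
  · rw [hE]
    letI := DRtopology T₁ T₂
    exact hUc.image (continuous_shiftSection hT hTi.continuous)
  · exact TopologicalSpace.isOpen_generateFrom_of_mem
      ⟨Ti '' U, U, (0, 0), en, hUc.image hTi.continuous, hTi.isOpenMap U hUo, hUc, hUo, rfl⟩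
  · rw [hE]
    rintro _ ⟨y, hy, rfl⟩ _ ⟨z, hz, rfl⟩ hyz
    rw [hinj hy hz hyz]
  · rw [hE]
    rintro _ ⟨y, -, rfl⟩ _ ⟨z, -, rfl⟩ hyz
    exact congrArg _ hyz
  · rw [hsE, hrE, Tstar_indicator hinj]
end
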